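/- arXiv:1011.3643 — 5 statements merged into one kernel-verified Lean document; each statement's English description precedes it below -/
import Mathlib

section
/- Let λ > 0, μ > 0, θ ∈ ℝ, let p ∈ ℝ⁴ be nonzero, and let y : ℝ → ℝ be a twice differentiable function satisfying y''(u) = -2 y(u)³ for all u and not identically zero. Then the function φ(x) := μ (2/λ)^{1/4} y(p·x + θ) satisfies □φ + λ φ³ = 0 on ℝ⁴ if and only if the dispersion relation p² = μ²√(λ/2) holds, where p² := p₀² − p₁² − p₂² − p₃² is the Minkowski square. In other words, the only effect of the nonlinearity on this exact wave is to generate the mass relation of a massive free particle. -/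
/-!
For a plane wave `A * y (p·x + θ)`, each second partial derivative is `pᵢ² A y''`, so `□` acts as
multiplication of `A y''` by the Minkowski square `p²`. With `y'' = -2 y³` the equation becomes
`A y³ (λ A² - 2 p²) = 0`. Since `p ≠ 0`, the phase `p·x + θ` takes every real value, in particular
one at which `y ≠ 0`; hence the equation holds everywhere iff `p² = λ A² / 2`, and for
`A = μ (2/λ)^(1/4)` the right-hand side is `μ² √(λ/2)`.
-/

open Real

/-- Minkowski inner product on `ℝ⁴` with signature `(+,−,−,−)`. -/
def mink (p x : Fin 4 → ℝ) : ℝ :=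
  p 0 * x 0 - p 1 * x 1 - p 2 * x 2 - p 3 * x 3

/-- Second partial derivative of `f : (Fin 4 → ℝ) → ℝ` along the `i`-th coordinate at `x`. -/
noncomputable def d2 (i : Fin 4) (f : (Fin 4 → ℝ) → ℝ) (x : Fin 4 → ℝ) : ℝ :=
  deriv (deriv fun t => f (Function.update x i t)) (x i)

lemma deriv_deriv_comp_affine (A a b : ℝ) (y : ℝ → ℝ) (hy1 : Differentiable ℝ y)
    (hy2 : Differentiable ℝ (deriv y)) (t : ℝ) :
    deriv (deriv fun t => A * y (a * t + b)) t = a ^ 2 * A * deriv (deriv y) (a * t + b) := by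
  have haff : ∀ t : ℝ, HasDerivAt (fun t => a * t + b) a t := fun t => by
    simpa using ((hasDerivAt_id t).const_mul a).add_const b
  have h1 : (deriv fun t => A * y (a * t + b)) = fun t => A * (deriv y (a * t + b) * a) := by
    funext t
    exact (((hy1 _).hasDerivAt.comp t (haff t)).const_mul A).deriv
  rw [h1]
  have h2 := ((((hy2 _).hasDerivAt.comp t (haff t)).mul_const a).const_mul A).deriv
  refine h2.trans ?_
  ring

lemma d2_plane_wave (A θ : ℝ) (p : Fin 4 → ℝ) (y : ℝ → ℝ) (hy1 : Differentiable ℝ y)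
    (hy2 : Differentiable ℝ (deriv y)) (i : Fin 4) (x : Fin 4 → ℝ) :
    d2 i (fun x' => A * y (mink p x' + θ)) x
      = p i ^ 2 * A * deriv (deriv y) (mink p x + θ) := by
  -- Along the `i`-th coordinate line the phase is affine, with slope `ε pᵢ` for a sign `ε`.
  obtain ⟨ε, hε, h⟩ : ∃ ε : ℝ, ε ^ 2 = 1 ∧ ∀ t, mink p (Function.update x i t) + θ
      = ε * p i * t + (mink p x + θ - ε * p i * x i) := by
    fin_cases i
    · exact ⟨1, by norm_num, fun t => by simp [mink, Function.update]; ring⟩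
    all_goals exact ⟨-1, by norm_num, fun t => by simp [mink, Function.update]; ring⟩
  unfold d2
  simp only [h]
  rw [deriv_deriv_comp_affine A _ _ y hy1 hy2, mul_pow, hε, one_mul]
  congr 2
  ring

lemma exists_mink_eq (p : Fin 4 → ℝ) (hp : p ≠ 0) (s : ℝ) : ∃ x, mink p x = s := by
  obtain ⟨i, hi⟩ := Function.ne_iff.mp hp
  have hi' : p i ≠ 0 := hi
  fin_cases i
  · exact ⟨Pi.single 0 (s / p 0), by simp [mink]; field_simp [show p 0 ≠ 0 from hi']⟩
  · exact ⟨Pi.single 1 (-s / p 1), by simp [mink]; field_simp [show p 1 ≠ 0 from hi']⟩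
  · exact ⟨Pi.single 2 (-s / p 2), by simp [mink]; field_simp [show p 2 ≠ 0 from hi']⟩
  · exact ⟨Pi.single 3 (-s / p 3), by simp [mink]; field_simp [show p 3 ≠ 0 from hi']⟩

lemma lam_mul_amplitude_sq (lam mu : ℝ) (hlam : 0 < lam) :
    lam * (mu * (2 / lam) ^ ((1 : ℝ) / 4)) ^ 2 = 2 * (mu ^ 2 * Real.sqrt (lam / 2)) := by
  have h1 : ((2 / lam) ^ ((1 : ℝ) / 4)) ^ 2 = Real.sqrt (2 / lam) := by
    rw [← Real.rpow_natCast, ← Real.rpow_mul (by positivity), Real.sqrt_eq_rpow]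
    norm_num
  have h2 : Real.sqrt (2 / lam) = (Real.sqrt (lam / 2))⁻¹ := by
    rw [← Real.sqrt_inv, inv_div]
  have h3 : Real.sqrt (lam / 2) ^ 2 = lam / 2 := Real.sq_sqrt (by positivity)
  have h4 : Real.sqrt (lam / 2) ≠ 0 := (Real.sqrt_pos.mpr (by positivity)).ne'
  rw [mul_pow, h1, h2]
  field_simp
  rw [h3]
  ring

/-- For `p ≠ 0` and `y` a nontrivial solution of `y'' = -2y³`, the wave
`φ(x) = μ (2/λ)^{1/4} y(p·x + θ)` solves `□φ + λφ³ = 0` on `ℝ⁴` if and only if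
the dispersion relation `p² = μ²√(λ/2)` holds. -/
theorem stmt_1 (lam mu θ : ℝ) (hlam : 0 < lam) (hmu : 0 < mu)
    (p : Fin 4 → ℝ) (hp : p ≠ 0) (y : ℝ → ℝ)
    (hy1 : Differentiable ℝ y) (hy2 : Differentiable ℝ (deriv y))
    (hode : ∀ u : ℝ, deriv (deriv y) u = -2 * (y u) ^ 3)
    (hy0 : ∃ u : ℝ, y u ≠ 0) :
    (∀ x : Fin 4 → ℝ,
      (d2 0 (fun x' => mu * (2 / lam) ^ ((1 : ℝ) / 4) * y (mink p x' + θ)) x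
        - d2 1 (fun x' => mu * (2 / lam) ^ ((1 : ℝ) / 4) * y (mink p x' + θ)) x
        - d2 2 (fun x' => mu * (2 / lam) ^ ((1 : ℝ) / 4) * y (mink p x' + θ)) x
        - d2 3 (fun x' => mu * (2 / lam) ^ ((1 : ℝ) / 4) * y (mink p x' + θ)) x)
        + lam * (mu * (2 / lam) ^ ((1 : ℝ) / 4) * y (mink p x + θ)) ^ 3 = 0)
    ↔ mink p p = mu ^ 2 * Real.sqrt (lam / 2) := by
  have hA : 0 < mu * (2 / lam) ^ ((1 : ℝ) / 4) := by positivity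
  have hA2 := lam_mul_amplitude_sq lam mu hlam
  generalize mu * (2 / lam) ^ ((1 : ℝ) / 4) = A at hA hA2 ⊢
  simp only [d2_plane_wave A θ p y hy1 hy2, hode]
  have key : ∀ x : Fin 4 → ℝ, (p 0 ^ 2 * A * (-2 * y (mink p x + θ) ^ 3)
        - p 1 ^ 2 * A * (-2 * y (mink p x + θ) ^ 3)
        - p 2 ^ 2 * A * (-2 * y (mink p x + θ) ^ 3)
        - p 3 ^ 2 * A * (-2 * y (mink p x + θ) ^ 3))
        + lam * (A * y (mink p x + θ)) ^ 3
      = A * y (mink p x + θ) ^ 3 * (lam * A ^ 2 - 2 * mink p p) := fun x => by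
    generalize y (mink p x + θ) = Y
    unfold mink
    ring
  simp only [key, hA2]
  constructor
  · intro h
    obtain ⟨u, hu⟩ := hy0
    obtain ⟨x, hx⟩ := exists_mink_eq p hp (u - θ)
    have hz := h x
    rw [hx, sub_add_cancel] at hz
    have := (mul_eq_zero.mp hz).resolve_left (mul_ne_zero hA.ne' (pow_ne_zero 3 hu))
    linarith
  · intro h x
    rw [h]
    ring
end

section
/- Let y : ℝ → ℝ be the solution of the initial value problem y'' = −2y³, y(0) = 0, y'(0) = 1. Then y is periodic with period 4K, where K := ∫₀¹ ds/√(1 − s⁴), and the maximum value of |y| equals 1 (attained, e.g., at t = K). (This identifies y with the Jacobi elliptic function sn(·, i), whose quarter period is the complete elliptic integral K(i) ≈ 1.3111028777.) -/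
/-!
The energy `y'² + y⁴` is conserved and equals `1`, which gives `|y| ≤ 1`. Since `y'' = -2y³` pushes
`y'` down as soon as `y` is positive, `y'` has a first zero `T > 0` (`exists_first_zero`); by energy
`y T = 1`, and on `(0, T)` one has `y' = √(1 - y⁴)`, so substituting `s = y t` in `K` gives `K = T`
(`quarter_period`).

The equation is invariant under `t ↦ 2T - t` and under `(t, y) ↦ (-t, -y)`, and both symmetries
preserve the data of `y` at `T` and at `0` respectively. By uniqueness (`solution_unique`, a Grönwall
estimate) `y (2T - t) = y t` and `y (-t) = -y t`, so `y (t + 2T) = -y t` and `4T` is a period.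
-/

open Real

/-- The complete elliptic integral `K(i) = ∫₀¹ ds/√(1 − s⁴)`. -/
noncomputable def Kell : ℝ := ∫ s in (0:ℝ)..1, 1 / Real.sqrt (1 - s ^ 4)

/-- Two solutions, bounded by `1`, of `y'' = -2y³` with the same data at `a` agree. The quantity
`E = (y - z)² + (p - q)²` satisfies `|E'| ≤ 7 E`, because `|y³ - z³| ≤ 3 |y - z|` on `[-1, 1]`. -/
theorem solution_unique {y p z q : ℝ → ℝ} {a : ℝ}
    (hy : ∀ t, HasDerivAt y (p t) t) (hp : ∀ t, HasDerivAt p (-2 * y t ^ 3) t)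
    (hz : ∀ t, HasDerivAt z (q t) t) (hq : ∀ t, HasDerivAt q (-2 * z t ^ 3) t)
    (by1 : ∀ t, |y t| ≤ 1) (bz1 : ∀ t, |z t| ≤ 1)
    (h0 : y a = z a) (h1 : p a = q a) (t : ℝ) : y t = z t := by
  set E : ℝ → ℝ := fun t => (y t - z t) ^ 2 + (p t - q t) ^ 2 with hE
  have hEa : E a = 0 := by simp [hE, h0, h1]
  have hEd : ∀ t, HasDerivAt E
      (2 * (y t - z t) * (p t - q t)
        + 2 * (p t - q t) * (-2 * y t ^ 3 - -2 * z t ^ 3)) t := by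
    intro t
    have h := (((hy t).sub (hz t)).pow 2).add (((hp t).sub (hq t)).pow 2)
    refine (h.congr_deriv ?_)
    simp
  have hbound : ∀ t, |2 * (y t - z t) * (p t - q t)
      + 2 * (p t - q t) * (-2 * y t ^ 3 - -2 * z t ^ 3)| ≤ 7 * E t := by
    intro t
    have e : 2 * (y t - z t) * (p t - q t) + 2 * (p t - q t) * (-2 * y t ^ 3 - -2 * z t ^ 3)
        = (2 * (y t - z t) * (p t - q t)) * (1 - 2 * (y t ^ 2 + y t * z t + z t ^ 2)) := by ring
    have a1 := abs_le.mp (by1 t)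
    have a2 := abs_le.mp (bz1 t)
    have b1 : |1 - 2 * (y t ^ 2 + y t * z t + z t ^ 2)| ≤ 7 := by
      rw [abs_le]; constructor <;> nlinarith [sq_nonneg (y t + z t), sq_nonneg (y t - z t)]
    have b2 : |2 * (y t - z t) * (p t - q t)| ≤ E t := by
      rw [abs_le]
      constructor <;> simp only [hE] <;>
        nlinarith [sq_nonneg (y t - z t + (p t - q t)), sq_nonneg (y t - z t - (p t - q t))]
    rw [e, abs_mul]
    nlinarith [abs_nonneg (2 * (y t - z t) * (p t - q t)),
      abs_nonneg (1 - 2 * (y t ^ 2 + y t * z t + z t ^ 2))]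
  have hexp : ∀ c t : ℝ, HasDerivAt (fun t => Real.exp (c * t)) (Real.exp (c * t) * c) t := by
    intro c t
    simpa using ((hasDerivAt_id t).const_mul c).exp
  have hle : E t ≤ 0 := by
    rcases le_total a t with hat | hat
    · have hanti : Antitone fun t => E t * Real.exp (-7 * t) :=
        antitone_of_hasDerivAt_nonpos (fun t => (hEd t).mul (hexp (-7) t)) (fun t => by
          have := (abs_le.mp (hbound t)).2
          simp only [Pi.zero_apply]
          nlinarith [Real.exp_pos (-7 * t)])
      have := hanti hat
      simp only [hEa, zero_mul] at this
      exact nonpos_of_mul_nonpos_left this (Real.exp_pos _)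
    · have hmono : Monotone fun t => E t * Real.exp (7 * t) :=
        monotone_of_hasDerivAt_nonneg (fun t => (hEd t).mul (hexp 7 t)) (fun t => by
          have := (abs_le.mp (hbound t)).1
          simp only [Pi.zero_apply]
          nlinarith [Real.exp_pos (7 * t)])
      have := hmono hat
      simp only [hEa, zero_mul] at this
      exact nonpos_of_mul_nonpos_left this (Real.exp_pos _)
  have : (y t - z t) ^ 2 = 0 := by
    simp only [hE] at hle
    nlinarith [sq_nonneg (y t - z t), sq_nonneg (p t - q t)]
  exact sub_eq_zero.mp (pow_eq_zero_iff two_ne_zero |>.mp this)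

theorem energy {y p : ℝ → ℝ}
    (hy : ∀ t, HasDerivAt y (p t) t) (hp : ∀ t, HasDerivAt p (-2 * y t ^ 3) t)
    (h0 : y 0 = 0) (h1 : p 0 = 1) (t : ℝ) : p t ^ 2 + y t ^ 4 = 1 := by
  have hd : ∀ t, HasDerivAt (fun t => p t ^ 2 + y t ^ 4) 0 t := fun t =>
    (((hp t).pow 2).add ((hy t).pow 4)).congr_deriv (by norm_num; ring)
  have := is_const_of_deriv_eq_zero (fun t => (hd t).differentiableAt) (fun t => (hd t).deriv) t 0
  simpa [h0, h1] using this

/-- As long as a continuous function with `p 0 = 1` does not vanish, it stays positive. -/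
theorem velocity_pos {p : ℝ → ℝ} (hc : Continuous p) (h1 : p 0 = 1) {t : ℝ} (ht : 0 ≤ t)
    (hne : ∀ s ∈ Set.Icc 0 t, p s ≠ 0) : 0 < p t := by
  by_contra hneg
  obtain ⟨s, hs, hs0⟩ := intermediate_value_Icc' ht hc.continuousOn
    (show (0 : ℝ) ∈ Set.Icc (p t) (p 0) from ⟨not_lt.mp hneg, by simp [h1]⟩)
  exact hne s hs hs0

theorem strictMonoOn_of_pos {y p : ℝ → ℝ} (hy : ∀ t, HasDerivAt y (p t) t) {D : Set ℝ}
    (hD : Convex ℝ D) (hpos : ∀ t ∈ interior D, 0 < p t) : StrictMonoOn y D :=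
  strictMonoOn_of_deriv_pos hD (fun t _ => (hy t).continuousAt.continuousWithinAt)
    (fun t ht => by rw [(hy t).deriv]; exact hpos t ht)

/-- The velocity has a first positive zero: otherwise `y` increases past `c = y 1 > 0`, and
`p' ≤ -2c³` makes `p` negative eventually. -/
theorem exists_first_zero {y p : ℝ → ℝ}
    (hy : ∀ t, HasDerivAt y (p t) t) (hp : ∀ t, HasDerivAt p (-2 * y t ^ 3) t)
    (h0 : y 0 = 0) (h1 : p 0 = 1) :
    ∃ T : ℝ, 0 < T ∧ p T = 0 ∧ ∀ t, 0 ≤ t → t < T → 0 < p t := by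
  have hc : Continuous p := continuous_iff_continuousAt.mpr fun t => (hp t).continuousAt
  set S : Set ℝ := {t | 0 ≤ t ∧ p t = 0} with hS
  have hne : S.Nonempty := by
    by_contra hemp
    have hpos : ∀ t, 0 ≤ t → 0 < p t := fun t ht =>
      velocity_pos hc h1 ht fun s hs hs0 => hemp ⟨s, hs.1, hs0⟩
    have hmono : StrictMonoOn y (Set.Ici 0) := strictMonoOn_of_pos hy (convex_Ici 0)
      (fun t ht => hpos t (interior_subset ht))
    have hcpos : 0 < y 1 := h0 ▸ hmono (by simp) (by simp) one_pos
    have hanti : AntitoneOn (fun t => p t + 2 * y 1 ^ 3 * t) (Set.Ici 1) := by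
      have hd : ∀ t, HasDerivAt (fun t => p t + 2 * y 1 ^ 3 * t)
          (-2 * y t ^ 3 + 2 * y 1 ^ 3) t := fun t =>
        ((hp t).add ((hasDerivAt_id t).const_mul (2 * y 1 ^ 3))).congr_deriv (by simp)
      refine antitoneOn_of_deriv_nonpos (convex_Ici 1)
        (fun t _ => (hd t).continuousAt.continuousWithinAt)
        (fun t _ => (hd t).differentiableAt.differentiableWithinAt) (fun t ht => ?_)
      rw [(hd t).deriv]
      have ht1 : (1 : ℝ) ≤ t := interior_subset ht
      have hle : y 1 ≤ y t := hmono.monotoneOn (by simp) (by simp; linarith) ht1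
      have := pow_le_pow_left₀ hcpos.le hle 3
      linarith
    -- By time `t` the velocity has dropped by at least `2c³ (t - 1) = p 1`.
    set t : ℝ := 1 + p 1 / (2 * y 1 ^ 3) with ht
    have hp1 := hpos 1 zero_le_one
    have ht1 : 1 ≤ t := by
      have : 0 ≤ p 1 / (2 * y 1 ^ 3) := by positivity
      linarith
    have h := hanti (by simp) ht1 ht1
    have e : 2 * y 1 ^ 3 * t = 2 * y 1 ^ 3 + p 1 := by
      rw [ht]; field_simp
    simp only [e] at h
    have := hpos t (by linarith)
    linarith
  have hcl : IsClosed S :=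
    (isClosed_le continuous_const continuous_id).inter (isClosed_eq hc continuous_const)
  have hbd : BddBelow S := ⟨0, fun t ht => ht.1⟩
  have hmem := hcl.csInf_mem hne hbd
  refine ⟨sInf S, lt_of_le_of_ne hmem.1 ?_, hmem.2, fun t ht htT => ?_⟩
  · intro h
    have := hmem.2
    rw [← h, h1] at this
    exact one_ne_zero this
  · exact velocity_pos hc h1 ht fun s hs hs0 =>
      absurd (csInf_le hbd ⟨hs.1, hs0⟩) (not_le.mpr (lt_of_le_of_lt hs.2 htT))

/-- The substitution `s = y t` maps `(0, T)` onto `(0, 1)` and turns the integrand of `Kell`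
into `1`. -/
theorem quarter_period {y p : ℝ → ℝ} {T : ℝ}
    (hy : ∀ t, HasDerivAt y (p t) t) (hen : ∀ t, p t ^ 2 + y t ^ 4 = 1)
    (h0 : y 0 = 0) (hT : 0 < T) (hyT : y T = 1)
    (hpos : ∀ t, 0 ≤ t → t < T → 0 < p t) : Kell = T := by
  have hc : Continuous y := continuous_iff_continuousAt.mpr fun t => (hy t).continuousAt
  have hmono : StrictMonoOn y (Set.Icc 0 T) := strictMonoOn_of_pos hy (convex_Icc 0 T)
    (fun t ht => by rw [interior_Icc] at ht; exact hpos t ht.1.le ht.2)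
  have himg : y '' Set.Ioo 0 T = Set.Ioo 0 1 := by
    apply Set.Subset.antisymm
    · rintro _ ⟨t, ht, rfl⟩
      have ht' := Set.Ioo_subset_Icc_self ht
      exact ⟨h0 ▸ hmono ⟨le_rfl, hT.le⟩ ht' ht.1, hyT ▸ hmono ht' ⟨hT.le, le_rfl⟩ ht.2⟩
    · have := intermediate_value_Ioo hT.le hc.continuousOn
      rwa [h0, hyT] at this
  have hsub := MeasureTheory.integral_image_eq_integral_abs_deriv_smul
    (measurableSet_Ioo (a := (0 : ℝ)) (b := T)) (fun t _ => (hy t).hasDerivWithinAt)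
    (hmono.injOn.mono Set.Ioo_subset_Icc_self) (fun s => 1 / Real.sqrt (1 - s ^ 4))
  have hone : ∫ t in Set.Ioo 0 T, |p t| • (1 / Real.sqrt (1 - y t ^ 4))
      = ∫ _ in Set.Ioo 0 T, (1 : ℝ) := by
    refine MeasureTheory.setIntegral_congr_fun measurableSet_Ioo fun t ht => ?_
    have hp0 := hpos t ht.1.le ht.2
    have e : 1 - y t ^ 4 = p t ^ 2 := by linarith [hen t]
    simp only [e, Real.sqrt_sq hp0.le, abs_of_pos hp0, smul_eq_mul]
    field_simp
  rw [Kell, intervalIntegral.integral_of_le zero_le_one, MeasureTheory.integral_Ioc_eq_integral_Ioo,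
    ← himg, hsub, hone]
  simp [hT.le]

/-- The solution of `y'' = -2y³`, `y 0 = 0`, `y' 0 = 1` (i.e. the Jacobi elliptic
function `sn(·, i)`) is periodic with period `4K`, where `K = ∫₀¹ ds/√(1 − s⁴)`,
and the maximum value of `|y|` equals `1`, attained at `t = K`. -/
theorem stmt_3 (y : ℝ → ℝ)
    (hy1 : Differentiable ℝ y) (hy2 : Differentiable ℝ (deriv y))
    (hode : ∀ u : ℝ, deriv (deriv y) u = -2 * (y u) ^ 3)
    (h0 : y 0 = 0) (h1 : deriv y 0 = 1) :
    (∀ t : ℝ, y (t + 4 * Kell) = y t) ∧ (∀ t : ℝ, |y t| ≤ 1) ∧ y Kell = 1 := by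
  have hy : ∀ t, HasDerivAt y (deriv y t) t := fun t => (hy1 t).hasDerivAt
  have hp : ∀ t, HasDerivAt (deriv y) (-2 * y t ^ 3) t := fun t => hode t ▸ (hy2 t).hasDerivAt
  have hen := energy hy hp h0 h1
  have hb : ∀ t, |y t| ≤ 1 := fun t => by
    have h4 : |y t| ^ 4 ≤ 1 := by
      rw [Even.pow_abs (by decide)]
      nlinarith [hen t, sq_nonneg (deriv y t)]
    exact (pow_le_one_iff_of_nonneg (abs_nonneg _) (by norm_num)).mp h4
  obtain ⟨T, hT, hpT, hpos⟩ := exists_first_zero hy hp h0 h1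
  have hyT : y T = 1 := by
    have hmono : StrictMonoOn y (Set.Icc 0 T) := strictMonoOn_of_pos hy (convex_Icc 0 T)
      (fun t ht => by rw [interior_Icc] at ht; exact hpos t ht.1.le ht.2)
    have hyT0 : 0 < y T := h0 ▸ hmono ⟨le_rfl, hT.le⟩ ⟨hT.le, le_rfl⟩ hT
    have h4 : y T ^ 4 = 1 := by simpa [hpT] using hen T
    exact (pow_eq_one_iff_of_nonneg hyT0.le (by norm_num)).mp h4
  have hK : Kell = T := quarter_period hy hen h0 hT hyT hpos
  have hodd : ∀ t, y t = -y (-t) := by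
    refine solution_unique (z := fun t => -y (-t)) (q := fun t => deriv y (-t)) (a := 0) hy hp
      (fun t => ?_) (fun t => ?_) hb (fun t => by simpa using hb (-t)) (by simp [h0]) (by simp)
    · exact ((hy (-t)).scomp t (hasDerivAt_neg t)).neg.congr_deriv (by simp)
    · exact ((hp (-t)).scomp t (hasDerivAt_neg t)).congr_deriv (by simp; ring)
  have hrefl : ∀ t, y t = y (2 * T - t) := by
    have hs : ∀ t, HasDerivAt (fun t => 2 * T - t) (-1) t := fun t =>
      (hasDerivAt_id t).const_sub (2 * T)
    have eT : 2 * T - T = T := by ring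
    refine solution_unique (z := fun t => y (2 * T - t)) (q := fun t => -deriv y (2 * T - t))
      (a := T) hy hp (fun t => ?_) (fun t => ?_) hb (fun t => hb _) (by simp [eT])
      (by simp [eT, hpT])
    · exact ((hy (2 * T - t)).scomp t (hs t)).congr_deriv (by simp)
    · exact ((hp (2 * T - t)).scomp t (hs t)).neg.congr_deriv (by simp)
  have hhalf : ∀ t, y (t + 2 * T) = -y t := fun t => by
    rw [hrefl, hodd t, neg_neg]
    congr 1
    ring
  refine ⟨fun t => ?_, hb, hK ▸ hyT⟩
  have e : t + 4 * Kell = (t + 2 * T) + 2 * T := by rw [hK]; ring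
  rw [e, hhalf, hhalf, neg_neg]
end

section
/- (Mapping theorem, exact SU(2) time-dependent case.) Let g ≠ 0, α ≠ 0 be real, let φ : ℝ → ℝ be twice differentiable, and define gauge potentials A^a_ν : ℝ⁴ → ℝ (color index a ∈ {1,2,3}, Lorentz index ν ∈ {0,1,2,3}) by A^a_ν(x) := φ(x₀) if ν = a and A^a_ν(x) := 0 otherwise. Then A satisfies the Lorenz gauge condition ∂^μ A^a_μ = 0 for every a, and A satisfies the full vacuum SU(2) Yang-Mills field equations ∂^μ∂_μ A^a_ν − (1 − 1/α) ∂_ν(∂^μ A^a_μ) + g ε^{abc} A^{bμ}(∂_μ A^c_ν − ∂_ν A^c_μ) + g ε^{abc} ∂^μ(A^b_μ A^c_ν) + g² ε^{abc} ε^{cde} A^{bμ} A^d_μ A^e_ν = 0 (for all a, ν) if and only if φ satisfies the scalar equation φ'' + 2g²φ³ = 0, i.e. □φ + λφ³ = 0 with λ = N g² for N = 2. Thus an extremum of the quartic scalar action with λ = Ng², taken with only time dependence, is an extremum of the SU(2) Yang-Mills action under the mapping A^a_μ = η^a_μ φ. -/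
/-!
Since `A^a_ν = δ_{ν a} φ(x₀)` depends on time only and has no time component, every term
`∂^μ A_μ`, and likewise every term `∂^μ (A^b_μ A^c_ν)`, vanishes for each single `μ`: for `μ = 0` the
field is zero, for `μ ≠ 0` the derivative is. The term `ε^{abc} A^{bμ} (∂_μ A^c_ν - ∂_ν A^c_μ)`
vanishes because `A^{bμ} ∂_μ = 0`, while `A^{bμ} ∂_ν A^c_μ` carries a factor `δ^{bc}`.
In the cubic term, `∑_μ A^{bμ} A^d_μ = -δ^{bd} φ²` and `ε^{abc} ε^{cbe} = -2 δ^{ae}` leave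
`2 g² φ³ δ_{ν a}`. Hence the left-hand side of the field equations is `δ_{ν a} (φ'' + 2 g² φ³)`
(`ymLHS_eq`).
-/

open Real

/-- Partial derivative of `f : (Fin 4 → ℝ) → ℝ` along the `μ`-th coordinate. -/
noncomputable def pd (μ : Fin 4) (f : (Fin 4 → ℝ) → ℝ) : (Fin 4 → ℝ) → ℝ :=
  fun x => deriv (fun t => f (Function.update x μ t)) (x μ)

/-- Minkowski metric `diag(1, −1, −1, −1)` (diagonal entries). -/
def eta : Fin 4 → ℝ := fun μ => if μ = 0 then 1 else -1

/-- Levi-Civita symbol on three (0-based) indices, `ε 0 1 2 = 1`. -/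
noncomputable def eps (a b c : Fin 3) : ℝ :=
  ((b.val : ℝ) - (a.val : ℝ)) * ((c.val : ℝ) - (b.val : ℝ)) * ((c.val : ℝ) - (a.val : ℝ)) / 2

/-- The mapped gauge potential `A^a_ν(x) = η^a_ν φ(x₀)`, with `η^a_ν = 1` iff the
Lorentz index `ν` equals the (spatial) color index `a` and `0` otherwise. -/
def ymA (φ : ℝ → ℝ) (a : Fin 3) (ν : Fin 4) : (Fin 4 → ℝ) → ℝ :=
  fun x => if (ν.val : ℕ) = a.val + 1 then φ (x 0) else 0

/-- The left-hand side of the vacuum SU(2) Yang-Mills field equations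
`∂^μ∂_μ A^a_ν − (1 − 1/α)∂_ν(∂^μ A^a_μ) + g ε^{abc} A^{bμ}(∂_μ A^c_ν − ∂_ν A^c_μ)
 + g ε^{abc} ∂^μ(A^b_μ A^c_ν) + g² ε^{abc} ε^{cde} A^{bμ} A^d_μ A^e_ν`. -/
noncomputable def ymLHS (g α : ℝ) (φ : ℝ → ℝ) (a : Fin 3) (ν : Fin 4) (x : Fin 4 → ℝ) : ℝ :=
  (∑ μ : Fin 4, eta μ * pd μ (pd μ (ymA φ a ν)) x)
  - (1 - 1 / α) * pd ν (fun x' => ∑ μ : Fin 4, eta μ * pd μ (ymA φ a μ) x') x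
  + g * ∑ b : Fin 3, ∑ c : Fin 3, eps a b c *
      ∑ μ : Fin 4, (eta μ * ymA φ b μ x) * (pd μ (ymA φ c ν) x - pd ν (ymA φ c μ) x)
  + g * ∑ b : Fin 3, ∑ c : Fin 3, eps a b c *
      ∑ μ : Fin 4, eta μ * pd μ (fun x' => ymA φ b μ x' * ymA φ c ν x') x
  + g ^ 2 * ∑ b : Fin 3, ∑ c : Fin 3, ∑ d : Fin 3, ∑ e : Fin 3, eps a b c * eps c d e *
      ∑ μ : Fin 4, (eta μ * ymA φ b μ x) * ymA φ d μ x * ymA φ e ν x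

/-- A purely time-dependent function has no spatial derivatives. -/
lemma pd_time_of_ne {μ : Fin 4} (hμ : μ ≠ 0) (h : ℝ → ℝ) :
    pd μ (fun x => h (x 0)) = fun _ => 0 := by
  funext x
  simp [pd, Function.update_of_ne hμ.symm]

lemma pd_ymA_of_ne {μ : Fin 4} (hμ : μ ≠ 0) (φ : ℝ → ℝ) (a : Fin 3) (ν : Fin 4) :
    pd μ (ymA φ a ν) = fun _ => 0 :=
  pd_time_of_ne hμ (fun t => if (ν.val : ℕ) = a.val + 1 then φ t else 0)

lemma pd_zero_ymA (φ : ℝ → ℝ) (a : Fin 3) (ν : Fin 4) :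
    pd 0 (ymA φ a ν) = ymA (deriv φ) a ν := by
  funext x
  by_cases h : (ν.val : ℕ) = a.val + 1 <;> simp [pd, ymA, h]

lemma ymA_zero (φ : ℝ → ℝ) (a : Fin 3) : ymA φ a 0 = fun _ => 0 := by
  funext x
  simp [ymA]

lemma pd_const_zero (μ : Fin 4) : pd μ (fun _ => 0) = fun _ => 0 := by
  funext x
  simp [pd]

/-- The Lorenz condition holds term by term. -/
lemma pd_ymA_self (φ : ℝ → ℝ) (a : Fin 3) (μ : Fin 4) : pd μ (ymA φ a μ) = fun _ => 0 := by
  by_cases hμ : μ = 0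
  · rw [hμ, ymA_zero, pd_const_zero]
  · exact pd_ymA_of_ne hμ φ a μ

lemma pd_ymA_mul (φ : ℝ → ℝ) (b c : Fin 3) (μ ν : Fin 4) :
    pd μ (fun x => ymA φ b μ x * ymA φ c ν x) = fun _ => 0 := by
  by_cases hμ : μ = 0
  · simp only [hμ, ymA_zero, zero_mul, pd_const_zero]
  · exact pd_time_of_ne hμ (fun t => (if (μ.val : ℕ) = b.val + 1 then φ t else 0) *
      (if (ν.val : ℕ) = c.val + 1 then φ t else 0))

lemma box_ymA (φ : ℝ → ℝ) (a : Fin 3) (ν : Fin 4) (x : Fin 4 → ℝ) :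
    ∑ μ : Fin 4, eta μ * pd μ (pd μ (ymA φ a ν)) x = ymA (deriv (deriv φ)) a ν x := by
  rw [Finset.sum_eq_single 0]
  · simp [pd_zero_ymA, eta]
  · intro μ _ hμ
    simp [pd_ymA_of_ne hμ, pd_const_zero]
  · simp

/-- Orthogonality of the color directions: `∑_μ A^{bμ} B^d_μ = -δ^{bd} φ ψ` for the mapped
potentials `A`, `B` of `φ`, `ψ`; the sign is that of the spatial metric. -/
lemma sum_eta_ymA_mul (φ ψ : ℝ → ℝ) (b d : Fin 3) (x : Fin 4 → ℝ) :
    ∑ μ : Fin 4, (eta μ * ymA φ b μ x) * ymA ψ d μ x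
      = if b = d then -(φ (x 0) * ψ (x 0)) else 0 := by
  fin_cases b <;> fin_cases d <;> simp [Fin.sum_univ_four, ymA, eta]

lemma eps_self (a b : Fin 3) : eps a b b = 0 := by
  simp [eps]

lemma sum_eps_mul_eps (a e : Fin 3) :
    ∑ b : Fin 3, ∑ c : Fin 3, eps a b c * eps c b e = if a = e then -2 else 0 := by
  fin_cases a <;> fin_cases e <;> norm_num [Fin.sum_univ_three, eps]

lemma curl_term (φ : ℝ → ℝ) (a : Fin 3) (ν : Fin 4) (x : Fin 4 → ℝ) :
    ∑ b : Fin 3, ∑ c : Fin 3, eps a b c *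
      ∑ μ : Fin 4, (eta μ * ymA φ b μ x) * (pd μ (ymA φ c ν) x - pd ν (ymA φ c μ) x) = 0 := by
  refine Finset.sum_eq_zero fun b _ => Finset.sum_eq_zero fun c _ => ?_
  have h1 : ∀ μ : Fin 4, (eta μ * ymA φ b μ x) * pd μ (ymA φ c ν) x = 0 := by
    intro μ
    by_cases hμ : μ = 0
    · simp [hμ, ymA_zero]
    · simp [pd_ymA_of_ne hμ]
  simp only [mul_sub, h1, zero_sub, Finset.sum_neg_distrib]
  by_cases hν : ν = 0
  · subst hν
    simp only [pd_zero_ymA, sum_eta_ymA_mul]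
    by_cases hbc : b = c
    · simp [hbc, eps_self]
    · simp [hbc]
  · simp [pd_ymA_of_ne hν]

lemma cubic_term (φ : ℝ → ℝ) (a : Fin 3) (ν : Fin 4) (x : Fin 4 → ℝ) :
    ∑ b : Fin 3, ∑ c : Fin 3, ∑ d : Fin 3, ∑ e : Fin 3, eps a b c * eps c d e *
      ∑ μ : Fin 4, (eta μ * ymA φ b μ x) * ymA φ d μ x * ymA φ e ν x
      = 2 * φ (x 0) ^ 2 * ymA φ a ν x := by
  -- Contract `μ`, which identifies `d` with `b`, and move the sum over `e` outside.
  have h : ∀ b c : Fin 3, ∑ d : Fin 3, ∑ e : Fin 3, eps a b c * eps c d e *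
      ∑ μ : Fin 4, (eta μ * ymA φ b μ x) * ymA φ d μ x * ymA φ e ν x
      = ∑ e : Fin 3, (eps a b c * eps c b e) * (-(φ (x 0) * φ (x 0)) * ymA φ e ν x) := by
    intro b c
    simp only [← Finset.sum_mul, sum_eta_ymA_mul]
    rw [Finset.sum_eq_single b]
    · simp
    · intro d _ hd
      simp [hd.symm]
    · simp
  simp only [h]
  have h2 : ∀ b : Fin 3, ∑ c : Fin 3, ∑ e : Fin 3,
      (eps a b c * eps c b e) * (-(φ (x 0) * φ (x 0)) * ymA φ e ν x)
      = ∑ e : Fin 3, ∑ c : Fin 3,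
      (eps a b c * eps c b e) * (-(φ (x 0) * φ (x 0)) * ymA φ e ν x) :=
    fun b => Finset.sum_comm
  simp only [h2]
  rw [Finset.sum_comm]
  simp only [← Finset.sum_mul, sum_eps_mul_eps, ite_mul, zero_mul, Finset.sum_ite_eq,
    Finset.mem_univ, if_true]
  ring

/-- The field equations collapse to the scalar equation along the diagonal `ν = a`. -/
lemma ymLHS_eq (g α : ℝ) (φ : ℝ → ℝ) (a : Fin 3) (ν : Fin 4) (x : Fin 4 → ℝ) :
    ymLHS g α φ a ν x
      = ymA (fun t => deriv (deriv φ) t + 2 * g ^ 2 * (φ t) ^ 3) a ν x := by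
  unfold ymLHS
  rw [box_ymA, curl_term, cubic_term]
  simp only [pd_ymA_self, pd_ymA_mul, mul_zero, Finset.sum_const_zero, pd_const_zero]
  unfold ymA
  split_ifs <;> ring

/-- Mapping theorem (exact SU(2) time-dependent case): the potential
`A^a_ν(x) = η^a_ν φ(x₀)` satisfies the Lorenz gauge condition `∂^μ A^a_μ = 0`, and it
satisfies the full vacuum SU(2) Yang-Mills equations if and only if `φ'' + 2g²φ³ = 0`,
i.e. `□φ + λφ³ = 0` with `λ = Ng²`, `N = 2`. -/
theorem stmt_7 (g α : ℝ) (hg : g ≠ 0) (hα : α ≠ 0) (φ : ℝ → ℝ)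
    (hφ1 : Differentiable ℝ φ) (hφ2 : Differentiable ℝ (deriv φ)) :
    (∀ (a : Fin 3) (x : Fin 4 → ℝ), ∑ μ : Fin 4, eta μ * pd μ (ymA φ a μ) x = 0) ∧
    ((∀ (a : Fin 3) (ν : Fin 4) (x : Fin 4 → ℝ), ymLHS g α φ a ν x = 0) ↔
      (∀ t : ℝ, deriv (deriv φ) t + 2 * g ^ 2 * (φ t) ^ 3 = 0)) := by
  refine ⟨fun a x => by simp [pd_ymA_self], ?_⟩
  simp only [ymLHS_eq]
  constructor
  · intro h t
    simpa [ymA] using h 0 1 (fun _ => t)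
  · intro h a ν x
    simp [ymA, h]
end

section
/- Let K := ∫₀¹ ds/√(1 − s⁴), B_n := (2n+1)(π²/K²)·(−1)^{n+1} e^{−(n+1/2)π}/(1 + e^{−(2n+1)π}), and m_n := (2n+1)M for a fixed M > 0. Then the series S := Σ_{n≥0} B_n/m_n² converges absolutely and S ≠ 0. (Hence the gluon propagator G(0) = −S of the decoupling solution is finite and nonzero at zero momentum.) -/
/-!
After cancelling one factor `2n+1`, the `n`-th term is `-(π²/(K²M²)) (-1)ⁿ aₙ`, where
`aₙ = xₙ/(1+xₙ²)/(2n+1)` and `xₙ = e^{-(n+1/2)π}`. Since `0 < xₙ < 1` decreases and `x/(1+x²)` is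
monotone on `[0,1]`, the sequence `aₙ` is positive and strictly decreasing, so the alternating sum
`Σ (-1)ⁿ aₙ` is at least `a₀ - a₁ > 0`. The bound `aₙ ≤ e^{-πn}` gives absolute convergence. The
prefactor is nonzero because `K > 0`, which requires integrability of `1/√(1-s⁴)` on `[0,1]`;
this follows by comparison with `(1-s)^{-1/2}`.
-/

open Real

/-- The residues `B_n = (2n+1)(π²/K²)(−1)^{n+1} e^{−(n+1/2)π}/(1 + e^{−(2n+1)π})`
of the infrared gluon/scalar propagator. -/
noncomputable def Bcoef (n : ℕ) : ℝ :=
  (2 * (n : ℝ) + 1) * (π ^ 2 / Kell ^ 2) *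
    ((-1) ^ (n + 1) * Real.exp (-(((n : ℝ) + 1 / 2)) * π)) / (1 + Real.exp (-(2 * (n : ℝ) + 1) * π))

/-- The integrability matters: a non-integrable integrand would have integral `0`. -/
lemma Kell_pos : 0 < Kell := by
  unfold Kell
  have hg : IntervalIntegrable (fun s : ℝ => (1 - s) ^ (-(1 / 2) : ℝ)) MeasureTheory.volume 0 1 := by
    have h := (intervalIntegral.intervalIntegrable_rpow' (a := 1) (b := 0)
      (r := -(1 / 2)) (by norm_num)).comp_sub_left 1
    simpa using h
  apply intervalIntegral.intervalIntegral_pos_of_pos_on _ _ one_pos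
  · refine hg.mono_fun' ?_ ?_
    · exact Measurable.aestronglyMeasurable (by fun_prop)
    · refine (MeasureTheory.ae_restrict_iff' measurableSet_uIoc).2 (Filter.Eventually.of_forall ?_)
      intro s hs
      rw [Set.uIoc_of_le zero_le_one] at hs
      obtain ⟨h0, h1⟩ := hs
      have hnn : 0 ≤ 1 - s := by linarith
      beta_reduce
      rw [Real.norm_of_nonneg (by positivity)]
      rcases h1.eq_or_lt with rfl | h1
      · norm_num
      · rw [Real.rpow_neg hnn, ← Real.sqrt_eq_rpow, ← one_div]
        have h4 : s ^ 4 ≤ s := by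
          simpa using pow_le_pow_of_le_one h0.le h1.le (show 1 ≤ 4 by norm_num)
        apply one_div_le_one_div_of_le (Real.sqrt_pos.2 (by linarith))
        exact Real.sqrt_le_sqrt (by linarith)
  · intro s hs
    have : s ^ 4 < 1 := pow_lt_one₀ hs.1.le hs.2 (by norm_num)
    exact one_div_pos.2 (Real.sqrt_pos.2 (by linarith))

/-- The absolute value of the `n`-th term of the series, up to the constant factor `π²/(K²M²)`. -/
noncomputable def acoef (n : ℕ) : ℝ :=
  Real.exp (-((n : ℝ) + 1 / 2) * π) / (1 + Real.exp (-((n : ℝ) + 1 / 2) * π) ^ 2) /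
    (2 * (n : ℝ) + 1)

lemma acoef_pos (n : ℕ) : 0 < acoef n := by
  unfold acoef; positivity

lemma acoef_le (n : ℕ) : acoef n ≤ Real.exp (-π) ^ n := by
  have h : Real.exp (-((n : ℝ) + 1 / 2) * π) ≤ Real.exp (-π) ^ n := by
    rw [← Real.exp_nat_mul]
    apply Real.exp_le_exp.2
    nlinarith [Real.pi_pos]
  unfold acoef
  refine (div_le_self (by positivity) ?_).trans ((div_le_self (by positivity) ?_).trans h)
  · have : (0 : ℝ) ≤ n := n.cast_nonneg
    linarith
  · nlinarith [sq_nonneg (Real.exp (-((n : ℝ) + 1 / 2) * π))]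

lemma acoef_succ_lt (n : ℕ) : acoef (n + 1) < acoef n := by
  unfold acoef
  have hn : (0 : ℝ) ≤ n := n.cast_nonneg
  have hx1 : Real.exp (-((n : ℝ) + 1 / 2) * π) < 1 := by
    apply Real.exp_lt_one_iff.2
    nlinarith [Real.pi_pos]
  have hyx : Real.exp (-(((n + 1 : ℕ) : ℝ) + 1 / 2) * π) < Real.exp (-((n : ℝ) + 1 / 2) * π) := by
    apply Real.exp_lt_exp.2
    push_cast
    nlinarith [Real.pi_pos]
  have hy := Real.exp_pos (-(((n + 1 : ℕ) : ℝ) + 1 / 2) * π)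
  generalize Real.exp (-(((n + 1 : ℕ) : ℝ) + 1 / 2) * π) = y at *
  generalize Real.exp (-((n : ℝ) + 1 / 2) * π) = x at *
  -- `x(1+y²) - y(1+x²) = (x-y)(1-xy)`
  have h : y / (1 + y ^ 2) < x / (1 + x ^ 2) := by
    rw [div_lt_div_iff₀ (by positivity) (by positivity)]
    have hxy : 0 < 1 - x * y := by nlinarith
    nlinarith [mul_pos (sub_pos.2 hyx) hxy]
  have hd : 2 * (n : ℝ) + 1 ≤ 2 * ((n + 1 : ℕ) : ℝ) + 1 := by push_cast; linarith
  have hx := hy.trans hyx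
  exact div_lt_div₀ h hd (by positivity) (by positivity)

lemma term_eq (M : ℝ) (n : ℕ) :
    Bcoef n / ((2 * (n : ℝ) + 1) * M) ^ 2 =
      -(π ^ 2 / Kell ^ 2 / M ^ 2) * ((-1) ^ n * acoef n) := by
  unfold Bcoef acoef
  have hsq : Real.exp (-(2 * (n : ℝ) + 1) * π) = Real.exp (-((n : ℝ) + 1 / 2) * π) ^ 2 := by
    rw [← Real.exp_nat_mul]
    congr 1
    push_cast
    ring
  rw [hsq, pow_succ]
  generalize Real.exp (-((n : ℝ) + 1 / 2) * π) = x
  have hn : (2 * (n : ℝ) + 1) ≠ 0 := by positivity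
  generalize 2 * (n : ℝ) + 1 = c at *
  have hx : 1 + x ^ 2 ≠ 0 := by positivity
  generalize 1 + x ^ 2 = d at *
  rw [mul_pow]
  field_simp
  ring

lemma summable_alternating : Summable (fun n : ℕ => |(-1) ^ n * acoef n|) := by
  have hr : Real.exp (-π) < 1 := Real.exp_lt_one_iff.2 (by linarith [Real.pi_pos])
  refine Summable.of_nonneg_of_le (fun n => abs_nonneg _) (fun n => ?_)
    (summable_geometric_of_lt_one (Real.exp_pos _).le hr)
  rw [abs_mul, abs_pow, abs_neg, abs_one, one_pow, one_mul, abs_of_pos (acoef_pos n)]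
  exact acoef_le n

lemma tsum_alternating_pos : 0 < ∑' n : ℕ, (-1) ^ n * acoef n := by
  have hs : Summable (fun n : ℕ => (-1) ^ n * acoef n) := summable_alternating.of_abs
  have hanti : Antitone acoef := antitone_nat_of_succ_le fun n => (acoef_succ_lt n).le
  have h := hanti.alternating_series_le_tendsto hs.hasSum.tendsto_sum_nat 1
  have h01 := acoef_succ_lt 0
  simp [Finset.sum_range_succ] at h h01
  linarith

/-- With masses `m_n = (2n+1)M`, `M > 0`, the series `S = Σ B_n/m_n²` converges
absolutely and `S ≠ 0`; hence the gluon propagator `G(0) = −S` of the decoupling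
solution is finite and nonzero at zero momentum. -/
theorem stmt_9 (M : ℝ) (hM : 0 < M) :
    Summable (fun n : ℕ => |Bcoef n / ((2 * (n : ℝ) + 1) * M) ^ 2|) ∧
    (∑' n : ℕ, Bcoef n / ((2 * (n : ℝ) + 1) * M) ^ 2) ≠ 0 := by
  have hK := Kell_pos
  simp only [term_eq]
  constructor
  · simp only [abs_mul (-(π ^ 2 / Kell ^ 2 / M ^ 2))]
    exact summable_alternating.mul_left _
  · rw [tsum_mul_left]
    exact mul_ne_zero (neg_ne_zero.2 (by positivity)) tsum_alternating_pos.ne'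
end

section
/- Let K := ∫₀¹ ds/√(1 − s⁴) and B_n := (2n+1)(π²/K²)·(−1)^{n+1} e^{−(n+1/2)π}/(1 + e^{−(2n+1)π}). For μ > 0, λ > 0 define m_n(μ, λ) := (2n+1)(π/2K)(λ/2)^{1/4} μ and, for real s with s < m₀(μ,λ)², G(s, μ, λ) := Σ_{n≥0} B_n/(s − m_n(μ,λ)²). Then G is differentiable in μ and λ and satisfies the renormalization-group scaling identity μ ∂G/∂μ − 4λ ∂G/∂λ = 0 (the anomalous dimension is γ = 0 and the beta function at the trivial infrared fixed point is β(λ) = 4λ). -/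
/-!
Since `m_n = (2n+1) m₀`, the propagator depends on `(μ, λ)` only through `t = m₀(μ,λ)²`:
`G(s, μ, λ) = F(t)` with `F(t) = Σ_n B_n / (s − (2n+1)² t)` (`scaledProp`, `Gprop_eq_scaledProp`).

The residues decay like `(2n+1) e^{−nπ}`, so on a half-line `t > r` with `max(s, 0) < r` the
termwise derivatives are dominated by the summable sequence `|B_n| (2n+1)² / (r − s)²`
(`summable_Bcoef_mul`), and `F` is differentiable for `t > max(s, 0)`
(`differentiableAt_scaledProp`).

Finally `m₀` is proportional to `μ λ^{1/4}`, hence `μ ∂m₀/∂μ = m₀ = 4λ ∂m₀/∂λ`, and the chain rule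
turns this into the identity for `G`.
-/

open Real

/-- The masses `m_n(μ,λ) = (2n+1)(π/2K)(λ/2)^{1/4} μ`. -/
noncomputable def mass (n : ℕ) (mu lam : ℝ) : ℝ :=
  (2 * (n : ℝ) + 1) * (π / (2 * Kell)) * (lam / 2) ^ ((1:ℝ)/4) * mu

/-- The infrared propagator `G(s, μ, λ) = Σ_n B_n/(s − m_n(μ,λ)²)`. -/
noncomputable def Gprop (s mu lam : ℝ) : ℝ :=
  ∑' n : ℕ, Bcoef n / (s - mass n mu lam ^ 2)

/-- The propagator as a function of the squared lowest mass `t = m₀²`. -/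
noncomputable def scaledProp (s t : ℝ) : ℝ :=
  ∑' n : ℕ, Bcoef n / (s - (2 * (n : ℝ) + 1) ^ 2 * t)

lemma Gprop_eq_scaledProp (s mu lam : ℝ) :
    Gprop s mu lam = scaledProp s (mass 0 mu lam ^ 2) := by
  unfold Gprop scaledProp
  refine tsum_congr fun n => ?_
  congr 2
  simp only [mass, Nat.cast_zero]
  ring

lemma abs_Bcoef_le (n : ℕ) :
    |Bcoef n| ≤ (π ^ 2 / Kell ^ 2) * ((2 * (n : ℝ) + 1) * Real.exp (-(n : ℝ))) := by
  have h1 : 1 ≤ 1 + Real.exp (-(2 * (n : ℝ) + 1) * π) := by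
    linarith [Real.exp_pos (-(2 * (n : ℝ) + 1) * π)]
  have h2 : Real.exp (-(((n : ℝ) + 1 / 2)) * π) ≤ Real.exp (-(n : ℝ)) := by
    apply Real.exp_le_exp.mpr
    have : (0 : ℝ) ≤ n := Nat.cast_nonneg n
    nlinarith [Real.pi_gt_three]
  have hn : (0 : ℝ) ≤ 2 * (n : ℝ) + 1 := by positivity
  have hK : 0 ≤ π ^ 2 / Kell ^ 2 := by positivity
  unfold Bcoef
  rw [abs_div, abs_of_pos (by linarith : 0 < 1 + Real.exp (-(2 * (n : ℝ) + 1) * π))]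
  refine (div_le_self (abs_nonneg _) h1).trans ?_
  rw [abs_mul, abs_mul, abs_mul, abs_pow, abs_neg, abs_one, one_pow, one_mul, abs_of_nonneg hn,
    abs_of_nonneg hK, Real.abs_exp]
  calc (2 * (n : ℝ) + 1) * (π ^ 2 / Kell ^ 2) * Real.exp (-(((n : ℝ) + 1 / 2)) * π)
      ≤ (2 * (n : ℝ) + 1) * (π ^ 2 / Kell ^ 2) * Real.exp (-(n : ℝ)) := by gcongr
    _ = _ := by ring

lemma summable_Bcoef_mul : Summable fun n : ℕ => |Bcoef n| * (2 * (n : ℝ) + 1) ^ 2 := by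
  have key (k : ℕ) : Summable fun n : ℕ => (n : ℝ) ^ k * Real.exp (-(n : ℝ)) := by
    simpa using Real.summable_pow_mul_exp_neg_nat_mul k one_pos
  have h : Summable fun n : ℕ => (π ^ 2 / Kell ^ 2) * (8 * ((n : ℝ) ^ 3 * Real.exp (-(n : ℝ)))
      + 12 * ((n : ℝ) ^ 2 * Real.exp (-(n : ℝ))) + 6 * ((n : ℝ) ^ 1 * Real.exp (-(n : ℝ)))
      + (n : ℝ) ^ 0 * Real.exp (-(n : ℝ))) :=
    (((((key 3).mul_left 8).add ((key 2).mul_left 12)).add ((key 1).mul_left 6)).add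
      (key 0)).mul_left _
  refine Summable.of_nonneg_of_le (fun n => by positivity) (fun n => ?_) h
  calc |Bcoef n| * (2 * (n : ℝ) + 1) ^ 2
      ≤ (π ^ 2 / Kell ^ 2) * ((2 * (n : ℝ) + 1) * Real.exp (-(n : ℝ)))
          * (2 * (n : ℝ) + 1) ^ 2 := by
        gcongr
        exact abs_Bcoef_le n
    _ = _ := by ring

lemma differentiableAt_scaledProp {s t : ℝ} (ht : 0 < t) (hst : s < t) :
    DifferentiableAt ℝ (scaledProp s) t := by
  obtain ⟨r, hr, hrt⟩ := exists_between (max_lt hst ht)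
  obtain ⟨hsr, hr0⟩ := max_lt_iff.mp hr
  have hgap : 0 < r - s := sub_pos.mpr hsr
  have hsq (n : ℕ) : (1 : ℝ) ≤ (2 * (n : ℝ) + 1) ^ 2 := by
    have : (0 : ℝ) ≤ n := Nat.cast_nonneg n
    nlinarith
  have hden (n : ℕ) (y : ℝ) (hy : r < y) : r - s ≤ (2 * (n : ℝ) + 1) ^ 2 * y - s := by
    nlinarith [hsq n]
  have hderiv (n : ℕ) (y : ℝ) (hy : y ∈ Set.Ioi r) :
      HasDerivAt (fun y => Bcoef n / (s - (2 * (n : ℝ) + 1) ^ 2 * y))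
        (Bcoef n * (2 * (n : ℝ) + 1) ^ 2 / (s - (2 * (n : ℝ) + 1) ^ 2 * y) ^ 2) y := by
    have hne : s - (2 * (n : ℝ) + 1) ^ 2 * y ≠ 0 := by
      have := hden n y hy
      intro h0
      linarith
    have h := (hasDerivAt_const y (Bcoef n)).div
      (((hasDerivAt_id y).const_mul ((2 * (n : ℝ) + 1) ^ 2)).const_sub s) hne
    refine h.congr_deriv ?_
    simp
  have hbound (n : ℕ) (y : ℝ) (hy : y ∈ Set.Ioi r) :
      ‖Bcoef n * (2 * (n : ℝ) + 1) ^ 2 / (s - (2 * (n : ℝ) + 1) ^ 2 * y) ^ 2‖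
        ≤ |Bcoef n| * (2 * (n : ℝ) + 1) ^ 2 / (r - s) ^ 2 := by
    have h2 : (r - s) ^ 2 ≤ (s - (2 * (n : ℝ) + 1) ^ 2 * y) ^ 2 := by
      rw [← neg_sq (s - _), neg_sub]
      exact pow_le_pow_left₀ hgap.le (hden n y hy) 2
    rw [Real.norm_eq_abs, abs_div, abs_mul, abs_of_nonneg (sq_nonneg (2 * (n : ℝ) + 1)),
      abs_of_nonneg (sq_nonneg (s - _))]
    gcongr
  have hsum : Summable fun n : ℕ => Bcoef n / (s - (2 * (n : ℝ) + 1) ^ 2 * t) := by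
    refine Summable.of_norm_bounded (summable_Bcoef_mul.div_const (r - s)) fun n => ?_
    have h1 := hden n t hrt
    rw [Real.norm_eq_abs, abs_div, abs_sub_comm, abs_of_pos (hgap.trans_le h1)]
    have h3 : |Bcoef n| ≤ |Bcoef n| * (2 * (n : ℝ) + 1) ^ 2 :=
      le_mul_of_one_le_right (abs_nonneg _) (hsq n)
    gcongr
  exact (hasDerivAt_tsum_of_isPreconnected (summable_Bcoef_mul.div_const ((r - s) ^ 2))
    isOpen_Ioi isPreconnected_Ioi hderiv hbound hrt hsum hrt).differentiableAt

lemma hasDerivAt_mass_mu {mu : ℝ} (lam : ℝ) (hmu : 0 < mu) :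
    HasDerivAt (fun mu' => mass 0 mu' lam) (mass 0 mu lam / mu) mu := by
  unfold mass
  refine ((hasDerivAt_id mu).const_mul _).congr_deriv ?_
  field_simp

lemma hasDerivAt_mass_lam (mu : ℝ) {lam : ℝ} (hlam : 0 < lam) :
    HasDerivAt (fun lam' => mass 0 mu lam') (mass 0 mu lam / (4 * lam)) lam := by
  unfold mass
  have h := (((hasDerivAt_id lam).div_const 2).rpow_const (p := (1 : ℝ) / 4)
    (Or.inl (by simp only [id]; positivity)))
  refine ((h.const_mul _).mul_const mu).congr_deriv ?_
  simp only [id]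
  rw [Real.rpow_sub_one (by positivity)]
  field_simp

/-- Renormalization-group scaling identity: for `μ, λ > 0` and `s < m₀(μ,λ)²` the
propagator `G` is differentiable in `μ` and in `λ`, and satisfies
`μ ∂G/∂μ − 4λ ∂G/∂λ = 0` (anomalous dimension `γ = 0`, beta function `β(λ) = 4λ`
at the trivial infrared fixed point). -/
theorem stmt_11 (mu lam s : ℝ) (hmu : 0 < mu) (hlam : 0 < lam)
    (hs : s < mass 0 mu lam ^ 2) :
    DifferentiableAt ℝ (fun mu' => Gprop s mu' lam) mu ∧
    DifferentiableAt ℝ (fun lam' => Gprop s mu lam') lam ∧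
    mu * deriv (fun mu' => Gprop s mu' lam) mu
      - 4 * lam * deriv (fun lam' => Gprop s mu lam') lam = 0 := by
  -- If `Kell` were `0`, all residues would vanish by the convention `x / 0 = 0` and `G = 0`;
  -- so positivity of the integral is not needed.
  by_cases hK : Kell = 0
  · have hG : ∀ a b c, Gprop a b c = 0 := fun a b c => by simp [Gprop, Bcoef, hK]
    simp [hG]
  have ht : 0 < mass 0 mu lam ^ 2 := by
    have h1 : (lam / 2) ^ ((1 : ℝ) / 4) ≠ 0 := by positivity
    have : mass 0 mu lam ≠ 0 := by
      unfold mass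
      simp [hK, hmu.ne', Real.pi_ne_zero]
      simpa using h1
    positivity
  have hF := (differentiableAt_scaledProp ht hs).hasDerivAt
  have h1 := hF.comp mu ((hasDerivAt_mass_mu lam hmu).pow 2)
  have h2 := hF.comp lam ((hasDerivAt_mass_lam mu hlam).pow 2)
  have e1 : (fun mu' => Gprop s mu' lam) = scaledProp s ∘ ((fun mu' => mass 0 mu' lam) ^ 2) :=
    funext fun _ => Gprop_eq_scaledProp _ _ _
  have e2 : (fun lam' => Gprop s mu lam') = scaledProp s ∘ ((fun lam' => mass 0 mu lam') ^ 2) :=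
    funext fun _ => Gprop_eq_scaledProp _ _ _
  rw [e1, e2]
  refine ⟨h1.differentiableAt, h2.differentiableAt, ?_⟩
  rw [h1.deriv, h2.deriv]
  field_simp
  ring
end
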